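/- arXiv:1406.0080 — 5 statements merged into one kernel-verified Lean document; each statement's English description precedes it below -/
import Mathlib

section
/- Let F be a field, let A be an n×m matrix over F, let v_1,…,v_r ∈ F^n and w_1,…,w_r ∈ F^m, and let B = Σ_{i=1}^r v_i w_iᵀ. Then the minimum of rank J(x,y,z) over all x ∈ F^r, y ∈ F^{r(r−1)}, z ∈ F^{r(r−1)/2} equals the minimum of rank(A + x·B) over all x ∈ F. -/
/-- The matrix `J(x,y,z)` from the reduction of Rank Minimization to Special Rank
Minimization.  Its rows are indexed by `Fin n` together with the pairs `(i,j)`, `i < j`,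
and its columns by `Fin m` together with two columns for each pair `(i,j)`, `i < j`.
The top-left block is `E(x) = A + ∑_i x_i v_i w_iᵀ`; above the diagonal block row the
pair `(i,j)` contributes the `n × 2` block
`C_{i,j}(x,y) = ( (y_{i,j} - x_i) v_i , (y_{j,i} - x_j) v_j )`, and below it, placed
block-diagonally, the `1 × 2` block
`D_{i,j}(y,z) = ( y_{i,j} - z_{i,j} , y_{j,i} - z_{i,j} )`; all other entries are `0`. -/
def Jmat (F : Type*) [Field F] (n m r : ℕ)
    (A : Matrix (Fin n) (Fin m) F) (v : Fin r → Fin n → F) (w : Fin r → Fin m → F)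
    (x : Fin r → F) (y : Fin r → Fin r → F)
    (z : {p : Fin r × Fin r // p.1 < p.2} → F) :
    Matrix (Fin n ⊕ {p : Fin r × Fin r // p.1 < p.2})
           (Fin m ⊕ ({p : Fin r × Fin r // p.1 < p.2} × Fin 2)) F :=
  Matrix.fromBlocks
    (A + ∑ t : Fin r, x t • Matrix.vecMulVec (v t) (w t))
    (Matrix.of fun i pc =>
      if pc.2 = 0 then (y pc.1.1.1 pc.1.1.2 - x pc.1.1.1) * v pc.1.1.1 i
      else (y pc.1.1.2 pc.1.1.1 - x pc.1.1.2) * v pc.1.1.2 i)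
    0
    (Matrix.of fun q pc =>
      if q = pc.1 then
        (if pc.2 = 0 then y pc.1.1.1 pc.1.1.2 - z pc.1 else y pc.1.1.2 pc.1.1.1 - z pc.1)
      else 0)


/-!
Setting every parameter equal to `t` turns `J` into `A + t • B` padded with zeros. Conversely, let
`W` be the column space of `J(x,y,z)`. If `x_i ≠ x_j`, then `z_{i,j}` differs from `x_i` or from
`x_j`. Say `z_{i,j} ≠ x_i`: then `y_{i,j} - x_i ≠ y_{i,j} - z_{i,j}`, so the column
`((y_{i,j} - x_i) v_i, (y_{i,j} - z_{i,j}) e_{i,j})` puts into `W` either `(v_i, 0)` or some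
`(a, e_{i,j})`. Choose `u` with `(v_u, 0) ∉ W`, if there is one, and `t = x_u`. For each `i` with
`(v_i, 0) ∉ W` and `x_i ≠ t`, some `(a, e_{u,i})` lies in `W`, and these unit vectors are distinct,
so a suitable map `(a, b) ↦ a + Φ b` sends each such `(a, e_{u,i})` to `v_i`. The image of `W` then
contains the column space of `E(x)` and every `v_i` with `x_i ≠ t`, hence the column space of
`A + t • B = E(x) + ∑ i, (t - x_i) • v_i w_iᵀ`, and its dimension is at most `rank J`.
-/

open Matrix

lemma col_mem_range_mulVecLin {R m n : Type*} [CommSemiring R] [Fintype n] (M : Matrix m n R)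
    (j : n) : M.col j ∈ LinearMap.range M.mulVecLin := by
  rw [range_mulVecLin]
  exact Submodule.subset_span (Set.mem_range_self j)

lemma rank_fromBlocks_zero_zero_zero {R l m n o : Type*} [CommSemiring R] [StrongRankCondition R]
    [Finite l] [Fintype n] [Fintype o] (M : Matrix l n R) :
    (fromBlocks M 0 0 0 : Matrix (l ⊕ m) (n ⊕ o) R).rank = M.rank := by
  classical
  have := Fintype.ofFinite l
  have hfactor : (fromBlocks M 0 0 0 : Matrix (l ⊕ m) (n ⊕ o) R) =
      (fromRows 1 0 : Matrix (l ⊕ m) l R) * (M * (fromCols 1 0 : Matrix n (n ⊕ o) R)) := by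
    rw [mul_fromCols, fromRows_mul_fromCols]
    simp
  refine le_antisymm ?_ (rank_submatrix_le (fromBlocks M 0 0 0) Sum.inl Sum.inl)
  rw [hfactor]
  exact (rank_mul_le_right _ _).trans (rank_mul_le_left _ _)

lemma mem_map_fromCols_one_of_sumElim_zero_mem {R α β : Type*} [CommSemiring R] [Fintype α]
    [DecidableEq α] [Fintype β] {W : Submodule R (α ⊕ β → R)} {a : α → R}
    (ha : Sum.elim a 0 ∈ W) (Φ : Matrix α β R) : a ∈ W.map (fromCols 1 Φ).mulVecLin :=
  ⟨_, ha, by simp⟩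

lemma exists_forall_mem_map_fromCols_one {R α β : Type*} [CommRing R] [Fintype α] [DecidableEq α]
    [Fintype β] [DecidableEq β] (W : Submodule R (α ⊕ β → R)) (s : β → α → R) :
    ∃ Φ : Matrix α β R, ∀ b, (∃ a, Sum.elim a (Pi.single b 1) ∈ W) →
      s b ∈ W.map (fromCols 1 Φ).mulVecLin := by
  choose! a ha using fun b (h : ∃ a, Sum.elim a (Pi.single b 1) ∈ W) ↦ h
  refine ⟨of fun i b ↦ s b i - a b i, fun b hb ↦ ⟨_, ha b hb, ?_⟩⟩
  ext i
  simp

lemma sumElim_zero_mem_or_exists_sumElim_mem {K α β : Type*} [DivisionRing K]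
    {W : Submodule K (α ⊕ β → K)} {a : α → K} {b : β → K} {c d : K} (hcd : c ≠ d)
    (h : Sum.elim (c • a) (d • b) ∈ W) :
    Sum.elim a 0 ∈ W ∨ ∃ a', Sum.elim a' b ∈ W := by
  rcases eq_or_ne d 0 with rfl | hd
  · refine .inl ((W.smul_mem_iff hcd).1 ?_)
    convert h using 1
    ext (i | i) <;> simp
  · refine .inr ⟨d⁻¹ • c • a, (W.smul_mem_iff hd).1 ?_⟩
    convert h using 1
    ext (i | i) <;> simp [hd]

lemma exists_forall_ne_mem_map_fromCols_one {R α ι : Type*} [CommRing R] [Fintype α]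
    [DecidableEq α] [Fintype ι] [LinearOrder ι]
    {W : Submodule R (α ⊕ {p : ι × ι // p.1 < p.2} → R)} {v : ι → α → R} {x : ι → R}
    (hW : ∀ p : {p : ι × ι // p.1 < p.2}, x p.1.1 ≠ x p.1.2 →
      Sum.elim (v p.1.1) 0 ∈ W ∨ Sum.elim (v p.1.2) 0 ∈ W ∨
        ∃ a, Sum.elim a (Pi.single p 1) ∈ W) :
    ∃ (t : R) (Φ : Matrix α {p : ι × ι // p.1 < p.2} R),
      ∀ i, x i ≠ t → v i ∈ W.map (fromCols 1 Φ).mulVecLin := by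
  by_cases hv : ∀ i, Sum.elim (v i) 0 ∈ W
  · exact ⟨0, 0, fun i _ ↦ mem_map_fromCols_one_of_sumElim_zero_mem (hv i) 0⟩
  obtain ⟨u, hu⟩ := not_forall.1 hv
  -- The row of a pair containing `u` is spent on the other member of the pair.
  obtain ⟨Φ, hΦ⟩ := exists_forall_mem_map_fromCols_one W
    fun p ↦ if p.1.1 = u then v p.1.2 else v p.1.1
  refine ⟨x u, Φ, fun i hi ↦ ?_⟩
  by_cases hvi : Sum.elim (v i) 0 ∈ W
  · exact mem_map_fromCols_one_of_sumElim_zero_mem hvi Φ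
  have hiu : i ≠ u := ne_of_apply_ne x hi
  rcases hiu.lt_or_gt with hlt | hgt
  · simpa [hiu] using hΦ ⟨(i, u), hlt⟩ (((hW ⟨(i, u), hlt⟩ hi).resolve_left hvi).resolve_left hu)
  · simpa using hΦ ⟨(u, i), hgt⟩ (((hW ⟨(u, i), hgt⟩ hi.symm).resolve_left hu).resolve_left hvi)

lemma range_add_smul_sum_vecMulVec_le {R m n ι : Type*} [CommRing R] [Fintype n] [Fintype ι]
    {A : Matrix m n R} {v : ι → m → R} {w : ι → n → R} {x : ι → R} {t : R}
    {S : Submodule R (m → R)}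
    (hA : LinearMap.range (A + ∑ i, x i • vecMulVec (v i) (w i)).mulVecLin ≤ S)
    (hv : ∀ i, x i ≠ t → v i ∈ S) :
    LinearMap.range (A + t • ∑ i, vecMulVec (v i) (w i)).mulVecLin ≤ S := by
  have hsplit : A + t • ∑ i, vecMulVec (v i) (w i) =
      (A + ∑ i, x i • vecMulVec (v i) (w i)) + ∑ i, (t - x i) • vecMulVec (v i) (w i) := by
    simp only [sub_smul, Finset.sum_sub_distrib, Finset.smul_sum]
    abel
  rintro _ ⟨c, rfl⟩
  rw [hsplit, mulVecLin_add, LinearMap.add_apply]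
  refine add_mem (hA (LinearMap.mem_range_self _ c)) ?_
  rw [mulVecLin_apply, sum_mulVec]
  refine sum_mem fun i _ ↦ ?_
  rcases eq_or_ne (x i) t with rfl | hi
  · simp
  · rw [smul_mulVec, vecMulVec_mulVec, op_smul_eq_smul]
    exact S.smul_mem _ (S.smul_mem _ (hv i hi))

namespace Jmat

variable {F : Type*} [Field F] {n m r : ℕ} (A : Matrix (Fin n) (Fin m) F)
  (v : Fin r → Fin n → F) (w : Fin r → Fin m → F) (x : Fin r → F) (y : Fin r → Fin r → F)
  (z : {p : Fin r × Fin r // p.1 < p.2} → F)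

lemma const_eq_fromBlocks (t : F) :
    Jmat F n m r A v w (fun _ ↦ t) (fun _ _ ↦ t) (fun _ ↦ t) =
      fromBlocks (A + t • ∑ i, vecMulVec (v i) (w i)) 0 0 0 := by
  ext (i | i) (j | j) <;> simp [Jmat, Finset.smul_sum]

lemma mulVec_sumElim_zero (c : Fin m → F) :
    Jmat F n m r A v w x y z *ᵥ Sum.elim c 0 =
      Sum.elim ((A + ∑ i, x i • vecMulVec (v i) (w i)) *ᵥ c) 0 := by
  simp [Jmat, fromBlocks_mulVec]

lemma col_inr_zero (p : {p : Fin r × Fin r // p.1 < p.2}) :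
    (Jmat F n m r A v w x y z).col (.inr (p, 0)) =
      Sum.elim ((y p.1.1 p.1.2 - x p.1.1) • v p.1.1)
        ((y p.1.1 p.1.2 - z p) • Pi.single p 1) := by
  ext (i | q) <;> simp [Jmat, Pi.single_apply]

lemma col_inr_one (p : {p : Fin r × Fin r // p.1 < p.2}) :
    (Jmat F n m r A v w x y z).col (.inr (p, 1)) =
      Sum.elim ((y p.1.2 p.1.1 - x p.1.2) • v p.1.2)
        ((y p.1.2 p.1.1 - z p) • Pi.single p 1) := by
  ext (i | q) <;> simp [Jmat, Pi.single_apply]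

lemma sumElim_mem_range_of_ne {p : {p : Fin r × Fin r // p.1 < p.2}} (hp : x p.1.1 ≠ x p.1.2) :
    Sum.elim (v p.1.1) 0 ∈ LinearMap.range (Jmat F n m r A v w x y z).mulVecLin ∨
      Sum.elim (v p.1.2) 0 ∈ LinearMap.range (Jmat F n m r A v w x y z).mulVecLin ∨
      ∃ a, Sum.elim a (Pi.single p 1) ∈
        LinearMap.range (Jmat F n m r A v w x y z).mulVecLin := by
  by_cases hz : z p = x p.1.1
  · have hne : y p.1.2 p.1.1 - x p.1.2 ≠ y p.1.2 p.1.1 - z p :=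
      sub_right_injective.ne fun h ↦ hp (hz.symm.trans h.symm)
    have hcol := col_mem_range_mulVecLin (Jmat F n m r A v w x y z) (.inr (p, 1))
    rw [col_inr_one] at hcol
    exact .inr (sumElim_zero_mem_or_exists_sumElim_mem hne hcol)
  · have hne : y p.1.1 p.1.2 - x p.1.1 ≠ y p.1.1 p.1.2 - z p :=
      sub_right_injective.ne (Ne.symm hz)
    have hcol := col_mem_range_mulVecLin (Jmat F n m r A v w x y z) (.inr (p, 0))
    rw [col_inr_zero] at hcol
    exact (sumElim_zero_mem_or_exists_sumElim_mem hne hcol).imp_right .inr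

lemma exists_rank_add_smul_le_rank :
    ∃ t : F, (A + t • ∑ i, vecMulVec (v i) (w i)).rank ≤ (Jmat F n m r A v w x y z).rank := by
  set W := LinearMap.range (Jmat F n m r A v w x y z).mulVecLin
  obtain ⟨t, Φ, hv⟩ := exists_forall_ne_mem_map_fromCols_one (W := W) (v := v) (x := x)
    fun _ ↦ sumElim_mem_range_of_ne A v w x y z
  have hE : LinearMap.range (A + ∑ i, x i • vecMulVec (v i) (w i)).mulVecLin ≤
      W.map (fromCols 1 Φ).mulVecLin := by
    rintro _ ⟨c, rfl⟩
    exact mem_map_fromCols_one_of_sumElim_zero_mem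
      (LinearMap.mem_range.2 ⟨_, mulVec_sumElim_zero A v w x y z c⟩) Φ
  exact ⟨t, (Submodule.finrank_mono (range_add_smul_sum_vecMulVec_le hE hv)).trans
    (Submodule.finrank_map_le _ _)⟩

end Jmat

/-- The minimum of `rank J(x,y,z)` over all parameters `x ∈ F^r`,
`y ∈ F^{r(r-1)}` and `z ∈ F^{r(r-1)/2}` equals the minimum of `rank (A + x • B)` over all
`x ∈ F`, where `B = ∑_{i=1}^r v_i w_iᵀ`. -/
theorem sInf_rank_Jmat_eq_sInf_rank
    (F : Type*) [Field F] (n m r : ℕ)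
    (A : Matrix (Fin n) (Fin m) F) (v : Fin r → Fin n → F) (w : Fin r → Fin m → F) :
    sInf {d : ℕ | ∃ (x : Fin r → F) (y : Fin r → Fin r → F)
        (z : {p : Fin r × Fin r // p.1 < p.2} → F),
        (Jmat F n m r A v w x y z).rank = d}
      = sInf {d : ℕ | ∃ t : F,
          (A + t • ∑ i : Fin r, Matrix.vecMulVec (v i) (w i)).rank = d} := by
  refine csInf_eq_csInf_of_forall_exists_le ?_ ?_
  · rintro _ ⟨x, y, z, rfl⟩
    obtain ⟨t, ht⟩ := Jmat.exists_rank_add_smul_le_rank A v w x y z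
    exact ⟨_, ⟨t, rfl⟩, ht⟩
  · rintro _ ⟨t, rfl⟩
    refine ⟨_, ⟨fun _ ↦ t, fun _ _ ↦ t, fun _ ↦ t, rfl⟩, ?_⟩
    rw [Jmat.const_eq_fromBlocks, rank_fromBlocks_zero_zero_zero]
end

section
/- Let F be a field, let A be an n×m matrix over F, let v ∈ F^n, w ∈ F^m and x ∈ F. Let M(x) be the (n+2)×(m+2) matrix given in block form by: first n rows ( A | 0 | v ) (column m+1 equal to zero, column m+2 equal to v), row n+1 equal to ( wᵀ | −1 | 0 ), and row n+2 equal to ( 0 | x | −1 ) (its only nonzero entries being x in column m+1 and −1 in column m+2). Then rank(A + x·v wᵀ) + 2 = rank M(x). In particular, M(x) differs from a fixed matrix only in the single entry at position (n+2, m+1), so minimizing rank(A + x·v wᵀ) over x ∈ F is a low rank matrix completion problem with one missing entry. -/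
/-- The `(n+2) × (m+2)` matrix `M(x) = ( A , 0 , v ; wᵀ , -1 , 0 ; 0 , x , -1 )`:
top-left block `A`; the two extra columns of the first `n` rows are `0` and `v`;
row `n+1` is `( wᵀ , -1 , 0 )`; row `n+2` is `( 0 , x , -1 )`. -/
def completionMatrix (F : Type*) [Field F] (n m : ℕ) (A : Matrix (Fin n) (Fin m) F)
    (v : Fin n → F) (w : Fin m → F) (x : F) :
    Matrix (Fin n ⊕ Fin 2) (Fin m ⊕ Fin 2) F :=
  Matrix.fromBlocks A
    (Matrix.of fun i c => if c = 0 then 0 else v i)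
    (Matrix.of fun c j => if c = 0 then w j else 0)
    (Matrix.of fun c c' =>
      if c = 0 then (if c' = 0 then -1 else 0) else (if c' = 0 then x else -1))

/-!
`M(x)` has the invertible lower right block `D = ( -1 , 0 ; x , -1 )`. Block elimination along `D`
preserves the rank and turns `M(x)` into the block diagonal matrix with blocks `D` and the Schur
complement of `D`. Only the entry `-x` of `D⁻¹` meets the nonzero parts of the borders, so this
Schur complement is `A + x • v wᵀ`.
-/

open Matrix Module

section FinrankProd

universe u v

variable {R : Type*} [Ring R] [HasRankNullity.{max u v} R] [StrongRankCondition R]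

lemma finrank_prod_of_hasRankNullity (M : Type u) (N : Type v) [AddCommGroup M] [Module R M]
    [Module.Finite R M] [AddCommGroup N] [Module R N] [Module.Finite R N] :
    finrank R (M × N) = finrank R M + finrank R N := by
  rw [← Submodule.finrank_quotient_add_finrank (LinearMap.fst R M N).ker,
    ((LinearMap.fst R M N).quotKerEquivOfSurjective LinearMap.fst_surjective).finrank_eq,
    LinearMap.ker_fst, LinearMap.finrank_range_of_inj LinearMap.inr_injective]

lemma finrank_range_prodMap {M M' : Type*} {N : Type u} {N' : Type v}
    [AddCommGroup M] [Module R M] [Module.Finite R M]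
    [AddCommGroup M'] [Module R M'] [Module.Finite R M']
    [AddCommGroup N] [Module R N] [AddCommGroup N'] [Module R N']
    (f : M →ₗ[R] N) (g : M' →ₗ[R] N') :
    finrank R (f.prodMap g).range = finrank R f.range + finrank R g.range := by
  have hrange : (f.prodMap g).range = (f.range.subtype.prodMap g.range.subtype).range := by
    simp only [LinearMap.range_prodMap, Submodule.range_subtype]
  have hinj : Function.Injective (f.range.subtype.prodMap g.range.subtype) :=
    Subtype.val_injective.prodMap Subtype.val_injective
  rw [hrange, LinearMap.finrank_range_of_inj hinj, finrank_prod_of_hasRankNullity]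

end FinrankProd

section BlockRank

variable {R l m n o : Type*} [CommRing R]

lemma mulVecLin_fromBlocks_zero_zero [Fintype m] [Fintype o] (A : Matrix l m R)
    (D : Matrix n o R) :
    (fromBlocks A 0 0 D).mulVecLin =
      (LinearEquiv.sumArrowLequivProdArrow l n R R).symm.toLinearMap ∘ₗ
        A.mulVecLin.prodMap D.mulVecLin ∘ₗ
          (LinearEquiv.sumArrowLequivProdArrow m o R R).toLinearMap := by
  refine LinearMap.ext fun y ↦ funext fun i ↦ ?_
  cases i <;> simp [mulVec, dotProduct]

variable [IsDomain R]

lemma rank_fromBlocks_zero_zero [Fintype m] [Fintype o] (A : Matrix l m R) (D : Matrix n o R) :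
    (fromBlocks A 0 0 D).rank = A.rank + D.rank := by
  rw [rank, mulVecLin_fromBlocks_zero_zero, LinearMap.range_comp, LinearEquiv.finrank_map_eq,
    LinearEquiv.range_comp, finrank_range_prodMap, rank, rank]

lemma rank_fromBlocks_of_isUnit₂₂ [Finite l] [Fintype m] [Fintype n] [DecidableEq n]
    (A : Matrix l m R) (B : Matrix l n R) (C : Matrix n m R) {D : Matrix n n R} (hD : IsUnit D) :
    (fromBlocks A B C D).rank = (A - B * D⁻¹ * C).rank + Fintype.card n := by
  classical
  let := Fintype.ofFinite l
  let := hD.invertible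
  rw [fromBlocks_eq_of_invertible₂₂, rank_mul_eq_left_of_isUnit_det _ _ (by simp),
    rank_mul_eq_right_of_isUnit_det _ _ (by simp), rank_fromBlocks_zero_zero,
    rank_of_isUnit D hD, invOf_eq_nonsing_inv]

end BlockRank

lemma transpose_zero_cons_mul_mul_cons_zero {R m n : Type*} [CommSemiring R] (v : m → R)
    (w : n → R) (a b c d : R) :
    (of ![0, v])ᵀ * !![a, b; c, d] * of ![w, 0] = c • vecMulVec v w := by
  ext i j
  simp [mul_apply, vecMulVec_apply, mul_left_comm, mul_assoc]

lemma isUnit_lowerTriangular_neg_one {R : Type*} [CommRing R] (x : R) :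
    IsUnit !![-1, 0; x, -1] := by
  simp [isUnit_iff_isUnit_det]

lemma inv_lowerTriangular_neg_one {R : Type*} [CommRing R] (x : R) :
    !![-1, 0; x, -1]⁻¹ = !![-1, 0; -x, -1] :=
  inv_eq_right_inv (by simp [one_fin_two])

section BorderedMatrix

variable {R m n : Type*}

/-- The matrix `M(x)` of the completion problem over any ring and with any row and column index
types. The upper right border is given by its columns `0` and `v`, the lower left one by its rows
`w` and `0`. -/
def borderedMatrix [Ring R] (A : Matrix m n R) (v : m → R) (w : n → R) (x : R) :
    Matrix (m ⊕ Fin 2) (n ⊕ Fin 2) R :=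
  fromBlocks A (of ![0, v])ᵀ (of ![w, 0]) !![-1, 0; x, -1]

lemma borderedMatrix_apply_eq_of_ne [Ring R] (A : Matrix m n R) (v : m → R) (w : n → R) (x x' : R)
    {i : m ⊕ Fin 2} {j : n ⊕ Fin 2} (h : ¬(i = Sum.inr 1 ∧ j = Sum.inr 0)) :
    borderedMatrix A v w x i j = borderedMatrix A v w x' i j := by
  rcases i with i | i <;> rcases j with j | j
  · rfl
  · rfl
  · rfl
  · fin_cases i <;> fin_cases j <;> first | rfl | exact absurd ⟨rfl, rfl⟩ h

variable [CommRing R] [IsDomain R] [Finite m] [Fintype n]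

lemma rank_borderedMatrix (A : Matrix m n R) (v : m → R) (w : n → R) (x : R) :
    (borderedMatrix A v w x).rank = (A + x • vecMulVec v w).rank + 2 := by
  rw [borderedMatrix, rank_fromBlocks_of_isUnit₂₂ _ _ _ (isUnit_lowerTriangular_neg_one x),
    inv_lowerTriangular_neg_one, transpose_zero_cons_mul_mul_cons_zero, neg_smul,
    sub_neg_eq_add, Fintype.card_fin]

theorem rank_add_smul_vecMulVec_add_two_eq_rank_completionMatrix_general
    (A : Matrix m n R) (v : m → R) (w : n → R) (x : R) :
    (A + x • vecMulVec v w).rank + 2 = (borderedMatrix A v w x).rank ∧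
      ∀ (x' : R) (i : m ⊕ Fin 2) (j : n ⊕ Fin 2), ¬(i = Sum.inr 1 ∧ j = Sum.inr 0) →
        borderedMatrix A v w x i j = borderedMatrix A v w x' i j :=
  ⟨(rank_borderedMatrix A v w x).symm, fun x' _ _ ↦ borderedMatrix_apply_eq_of_ne A v w x x'⟩

end BorderedMatrix

lemma completionMatrix_eq_borderedMatrix (F : Type*) [Field F] (n m : ℕ)
    (A : Matrix (Fin n) (Fin m) F) (v : Fin n → F) (w : Fin m → F) (x : F) :
    completionMatrix F n m A v w x = borderedMatrix A v w x := by
  ext (i | i) (j | j)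
  · rfl
  · fin_cases j <;> rfl
  · fin_cases i <;> rfl
  · fin_cases i <;> fin_cases j <;> rfl

/-- `rank (A + x • v wᵀ) + 2 = rank M(x)`, and moreover `M(x)` differs from `M(x')`
only in the single entry at position `(n+2, m+1)`, so minimizing `rank (A + x • v wᵀ)` over
`x ∈ F` is a low rank matrix completion problem with one missing entry. -/
theorem rank_add_smul_vecMulVec_add_two_eq_rank_completionMatrix
    (F : Type*) [Field F] (n m : ℕ) (A : Matrix (Fin n) (Fin m) F)
    (v : Fin n → F) (w : Fin m → F) (x : F) :
    (A + x • Matrix.vecMulVec v w).rank + 2 = (completionMatrix F n m A v w x).rank ∧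
      ∀ (x' : F) (i : Fin n ⊕ Fin 2) (j : Fin m ⊕ Fin 2),
        ¬(i = Sum.inr 1 ∧ j = Sum.inr 0) →
          completionMatrix F n m A v w x i j = completionMatrix F n m A v w x' i j := by
  simp only [completionMatrix_eq_borderedMatrix]
  exact rank_add_smul_vecMulVec_add_two_eq_rank_completionMatrix_general A v w x
end

section
/- Let F be a field, let A be an n×m matrix over F, and let B_1,…,B_s ∈ Mat_{n,m}(F) be rank-1 matrices, B_k = v_k w_kᵀ with v_k ∈ F^n, w_k ∈ F^m, which are linearly independent in Mat_{n,m}(F). Let T : Fin n → Fin m → Fin (s+1) → F be the order-3 tensor with slices T(·,·,k) = B_k for k = 1,…,s and T(·,·,s+1) = A, i.e. T = A⊗e_{s+1} + Σ_{k=1}^s v_k⊗w_k⊗e_k. Suppose T = Σ_{j=1}^l a_j⊗b_j⊗c_j is any decomposition of T into l pure tensors (a_j ∈ F^n, b_j ∈ F^m, c_j ∈ F^{s+1}). Then the vectors c_1,…,c_l together with the standard basis vector e_{s+1} span F^{s+1}. -/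
/-!
Write the tensor as `T = ∑ u, X u ⊗ c u`, so that its `k`-th slice is `∑ u, c u k • X u`, the
image of the `k`-th column of the matrix `c` under the linear map `y ↦ ∑ u, y u • X u`. If the
slices with index in `J` are linearly independent, then so are the columns of `c` with index in
`J`. Row rank being equal to column rank, the restrictions of the rows `c u` to `J` span `F ^ J`.
The kernel of the restriction map `F ^ ι → F ^ J` is spanned by the standard basis vectors with
index outside `J`. Here `J` consists of all indices but the last, whose slice is arbitrary.
-/

section

open Module Submodule

variable {F V ι κ τ : Type*}

theorem linearIndependent_col_of_linearIndependent_sum_smul [Semiring F] [AddCommMonoid V]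
    [Module F V] [Fintype τ] (c : Matrix τ κ F) (X : τ → V)
    (h : LinearIndependent F fun k => ∑ u, c u k • X u) : LinearIndependent F c.col :=
  .of_comp (Fintype.linearCombination F X) h

theorem span_range_row_eq_top_of_linearIndependent_col [Field F] [Finite κ] [Finite τ]
    (c : Matrix τ κ F) (h : LinearIndependent F c.col) : span F (Set.range c.row) = ⊤ := by
  have := Fintype.ofFinite κ
  have := Fintype.ofFinite τ
  refine eq_top_of_finrank_eq ?_
  calc
    finrank F (span F (Set.range c.row)) = c.rank := c.rank_eq_finrank_span_row.symm
    _ = c.transpose.rank := c.rank_transpose.symm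
    _ = Fintype.card κ := LinearIndependent.rank_matrix h
    _ = finrank F (κ → F) := (finrank_fintype_fun_eq_card F).symm

theorem ker_funLeft_subtype_val [Semiring F] [Finite ι] [DecidableEq ι] (J : Set ι) :
    LinearMap.ker (LinearMap.funLeft F F ((↑) : J → ι)) =
      span F ((fun i => Pi.single i 1) '' Jᶜ) := by
  ext x
  rw [← funext (Pi.basisFun_apply F ι), ← Pi.spanSubset]
  simp [Pi.mem_spanSubset_iff, funext_iff, LinearMap.funLeft_apply]

theorem span_single_image_compl_union_range_eq_top_of_linearIndepOn [Field F]
    [AddCommGroup V] [Module F V] [Finite ι] [DecidableEq ι] [Fintype τ] (J : Set ι)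
    (X : τ → V) (c : τ → ι → F) (hli : LinearIndepOn F (fun k => ∑ u, c u k • X u) J) :
    span F ((fun i => Pi.single i 1) '' Jᶜ ∪ Set.range c) = ⊤ := by
  let restrict : (ι → F) →ₗ[F] (J → F) := LinearMap.funLeft F F (↑)
  have restrict_surjective : LinearMap.range restrict = ⊤ :=
    LinearMap.range_eq_top.mpr <|
      LinearMap.funLeft_surjective_of_injective F F _ Subtype.val_injective
  have map_span : (span F (Set.range c)).map restrict = ⊤ := by
    rw [Submodule.map_span, ← Set.range_comp]
    exact span_range_row_eq_top_of_linearIndependent_col (fun u => restrict (c u)) <|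
      linearIndependent_col_of_linearIndependent_sum_smul _ X hli
  rwa [LinearMap.map_eq_top_iff restrict_surjective, ker_funLeft_subtype_val, sup_comm,
    ← span_union] at map_span

theorem span_insert_last_single_range_eq_top_of_tensor_decomposition_general [Field F]
    [AddCommGroup V] [Module F V] [Fintype τ] {s : ℕ} {B : Fin s → V}
    (hli : LinearIndependent F B) (X : τ → V) (c : τ → Fin (s + 1) → F)
    (hB : ∀ k, B k = ∑ u, c u k.castSucc • X u) :
    span F (insert (Pi.single (Fin.last s) 1) (Set.range c)) = ⊤ := by
  obtain rfl : B = fun k => ∑ u, c u k.castSucc • X u := funext hB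
  have hli_compl : LinearIndepOn F (fun k => ∑ u, c u k • X u) {Fin.last s}ᶜ := by
    rwa [← Fin.range_succAbove, Fin.succAbove_last,
      linearIndepOn_range_iff (Fin.castSucc_injective s)]
  simpa only [compl_compl, Set.image_singleton, Set.singleton_union] using
    span_single_image_compl_union_range_eq_top_of_linearIndepOn _ X c hli_compl

end

/-- Let `B_k = v_k w_kᵀ` (for `k = 1, …, s`) be rank-one matrices that are
linearly independent in `Mat_{n,m}(F)`, let `A` be an `n × m` matrix, and let
`T = A ⊗ e_{s+1} + ∑_k v_k ⊗ w_k ⊗ e_k` be the order-3 tensor whose `k`-th slice is `B_k`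
for `k ≤ s` and whose last slice is `A`.  If `T = ∑_{j=1}^l a_j ⊗ b_j ⊗ c_j` is any
decomposition of `T` into `l` pure tensors, then the vectors `c_1, …, c_l` together with
the standard basis vector `e_{s+1}` span `F^{s+1}`. -/
theorem span_insert_last_single_range_eq_top_of_tensor_decomposition
    (F : Type*) [Field F] (n m s l : ℕ)
    (A : Matrix (Fin n) (Fin m) F) (v : Fin s → Fin n → F) (w : Fin s → Fin m → F)
    (hli : LinearIndependent F (fun k : Fin s => Matrix.vecMulVec (v k) (w k)))
    (a : Fin l → Fin n → F) (b : Fin l → Fin m → F) (c : Fin l → Fin (s + 1) → F)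
    (hT : ∀ (i : Fin n) (j : Fin m) (k : Fin (s + 1)),
      (Fin.lastCases (A i j) (fun t : Fin s => v t i * w t j) k : F) =
        ∑ u : Fin l, a u i * b u j * c u k) :
    Submodule.span F (insert (Pi.single (Fin.last s) (1 : F)) (Set.range c)) = ⊤ := by
  refine span_insert_last_single_range_eq_top_of_tensor_decomposition_general hli
    (fun u => Matrix.vecMulVec (a u) (b u)) c fun k => Matrix.ext fun i j => ?_
  simpa [Matrix.vecMulVec_apply, Matrix.sum_apply, mul_comm] using hT i j k.castSucc
end

section
/- Let F be a field, let A be an n×m matrix over F, and let B_1,…,B_s ∈ Mat_{n,m}(F) be rank-1 matrices, B_k = v_k w_kᵀ with v_k ∈ F^n, w_k ∈ F^m, which are linearly independent in Mat_{n,m}(F). Let T : Fin n → Fin m → Fin (s+1) → F be the order-3 tensor with slices T(·,·,k) = B_k for k = 1,…,s and T(·,·,s+1) = A. Then for every (x_1,…,x_s) ∈ F^s, the tensor rank of T is at most rank(A + x_1 B_1 + ⋯ + x_s B_s) + s. -/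
/-- The tensor rank of an order-3 tensor `T : Fin n → Fin m → Fin p → F`: the least `l`
such that `T` is a sum of `l` pure tensors. -/
noncomputable def tensorRank3 (F : Type*) [Field F] (n m p : ℕ)
    (T : Fin n → Fin m → Fin p → F) : ℕ :=
  sInf {l : ℕ | ∃ (a : Fin l → Fin n → F) (b : Fin l → Fin m → F) (c : Fin l → Fin p → F),
    ∀ i j k, T i j k = ∑ u : Fin l, a u i * b u j * c u k}

/-!
Adding multiples of the other slices to the last one is a change of basis in the third factor:
`T = (A + ∑ₖ xₖ Bₖ) ⊗ e_{s+1} + ∑ₖ Bₖ ⊗ (eₖ - xₖ e_{s+1})`. By subadditivity it is enough to bound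
the two summands. A matrix of rank `r` is a sum of `r` pure tensors, so the first has tensor rank at
most `rank (A + ∑ₖ xₖ Bₖ)`; the second is the image of the tensor with slices `Bₖ` under a linear
map of the third factor, which cannot increase the tensor rank.
-/

open Matrix

theorem exists_rank_factorization {R m n : Type*} [CommRing R] [IsDomain R]
    [IsPrincipalIdealRing R] [Fintype n] (M : Matrix m n R) :
    ∃ (P : Matrix m (Fin M.rank) R) (Q : Matrix (Fin M.rank) n R), M = P * Q := by
  classical
  let b : Module.Basis (Fin M.rank) R (LinearMap.range M.mulVecLin) :=
    Module.finBasisOfFinrankEq R _ rfl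
  let col (j : n) : LinearMap.range M.mulVecLin := M.mulVecLin.rangeRestrict (Pi.single j 1)
  refine ⟨.of fun i u => (b u : m → R) i, .of fun u j => b.repr (col j) u, ?_⟩
  ext i j
  calc M i j = (col j : m → R) i := by simp [col]
    _ = (∑ u, b.repr (col j) u • b u : LinearMap.range M.mulVecLin).1 i := by rw [b.sum_repr]
    _ = ∑ u, (b u : m → R) i * b.repr (col j) u := by
      simp only [Submodule.coe_sum, Submodule.coe_smul, Finset.sum_apply, Pi.smul_apply,
        smul_eq_mul, mul_comm]

section PureTensorSum

variable {R α β γ δ : Type*} [CommSemiring R]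

/-- `T` is a sum of pure tensors indexed by `ι`. Allowing any finite index type instead of `Fin l`
lets two decompositions be combined along a disjoint union of their index types. -/
def IsPureTensorSum (ι : Type*) [Fintype ι] (T : α → β → γ → R) : Prop :=
  ∃ (a : ι → α → R) (b : ι → β → R) (c : ι → γ → R),
    ∀ i j k, T i j k = ∑ u, a u i * b u j * c u k

variable {ι κ : Type*} [Fintype ι] [Fintype κ]

theorem isPureTensorSum_prod [Fintype α] [Fintype β] (T : α → β → γ → R) :
    IsPureTensorSum (α × β) T := by
  classical
  refine ⟨fun u => Pi.single u.1 1, fun u => Pi.single u.2 1, fun u => T u.1 u.2, fun i j k => ?_⟩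
  simp [Fintype.sum_prod_type, Pi.single_apply]

theorem isPureTensorSum_mul (P : Matrix α ι R) (Q : Matrix ι β R) (c : γ → R) :
    IsPureTensorSum ι fun i j k => (P * Q) i j * c k :=
  ⟨Pᵀ, Q, fun _ => c, fun i j k => by simp [Matrix.mul_apply, Finset.sum_mul]⟩

theorem isPureTensorSum_vecMulVec (v : ι → α → R) (w : ι → β → R) :
    IsPureTensorSum ι fun i j t => vecMulVec (v t) (w t) i j := by
  classical
  exact ⟨v, w, fun t => Pi.single t 1, fun i j t => by simp [vecMulVec_apply, Pi.single_apply]⟩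

namespace IsPureTensorSum

variable {S T : α → β → γ → R}

theorem reindex (hT : IsPureTensorSum ι T) (e : κ ≃ ι) : IsPureTensorSum κ T := by
  obtain ⟨a, b, c, h⟩ := hT
  exact ⟨a ∘ e, b ∘ e, c ∘ e, fun i j k =>
    (h i j k).trans (e.sum_comp fun u => a u i * b u j * c u k).symm⟩

theorem add (hS : IsPureTensorSum ι S) (hT : IsPureTensorSum κ T) :
    IsPureTensorSum (ι ⊕ κ) (S + T) := by
  obtain ⟨a, b, c, hS⟩ := hS
  obtain ⟨a', b', c', hT⟩ := hT
  exact ⟨Sum.elim a a', Sum.elim b b', Sum.elim c c', fun i j k => by simp [hS, hT]⟩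

theorem vecMul [Fintype γ] (hT : IsPureTensorSum ι T) (C : Matrix γ δ R) :
    IsPureTensorSum ι fun i j => T i j ᵥ* C := by
  obtain ⟨a, b, c, h⟩ := hT
  refine ⟨a, b, fun u => c u ᵥ* C, fun i j l => ?_⟩
  have hslice : T i j = ∑ u, (a u i * b u j) • c u := by
    ext k
    simp [h]
  simp [hslice, sum_vecMul, smul_vecMul]

end IsPureTensorSum

end PureTensorSum

section TensorRank

variable {F : Type*} [Field F] {n m p q s : ℕ}

theorem IsPureTensorSum.tensorRank3_le_card {ι : Type*} [Fintype ι]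
    {T : Fin n → Fin m → Fin p → F} (hT : IsPureTensorSum ι T) :
    tensorRank3 F n m p T ≤ Fintype.card ι :=
  Nat.sInf_le (hT.reindex (Fintype.equivFin ι).symm)

theorem isPureTensorSum_tensorRank3 (T : Fin n → Fin m → Fin p → F) :
    IsPureTensorSum (Fin (tensorRank3 F n m p T)) T :=
  Nat.sInf_mem (s := {l | IsPureTensorSum (Fin l) T})
    ⟨n * m, (isPureTensorSum_prod T).reindex finProdFinEquiv.symm⟩

theorem tensorRank3_add_le (S T : Fin n → Fin m → Fin p → F) :
    tensorRank3 F n m p (S + T) ≤ tensorRank3 F n m p S + tensorRank3 F n m p T := by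
  simpa using
    ((isPureTensorSum_tensorRank3 S).add (isPureTensorSum_tensorRank3 T)).tensorRank3_le_card

theorem tensorRank3_vecMul_le (T : Fin n → Fin m → Fin p → F) (C : Matrix (Fin p) (Fin q) F) :
    tensorRank3 F n m q (fun i j => T i j ᵥ* C) ≤ tensorRank3 F n m p T := by
  simpa using ((isPureTensorSum_tensorRank3 T).vecMul C).tensorRank3_le_card

theorem tensorRank3_mul_le_rank (M : Matrix (Fin n) (Fin m) F) (c : Fin p → F) :
    tensorRank3 F n m p (fun i j k => M i j * c k) ≤ M.rank := by
  obtain ⟨P, Q, hPQ⟩ := exists_rank_factorization M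
  simpa [← hPQ] using (isPureTensorSum_mul P Q c).tensorRank3_le_card

theorem tensorRank3_vecMulVec_le (v : Fin s → Fin n → F) (w : Fin s → Fin m → F) :
    tensorRank3 F n m s (fun i j t => vecMulVec (v t) (w t) i j) ≤ s := by
  simpa using (isPureTensorSum_vecMulVec v w).tensorRank3_le_card

end TensorRank

theorem lastCases_eq_add_vecMul {R α β : Type*} [CommRing R] {s : ℕ}
    (A : Matrix α β R) (B : Fin s → Matrix α β R) (x : Fin s → R) :
    (fun i j k => Fin.lastCases (A i j) (fun t => B t i j) k : α → β → Fin (s + 1) → R) =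
      (fun i j k => (A + ∑ t, x t • B t) i j * (Pi.single (Fin.last s) 1 : Fin (s + 1) → R) k) +
        fun i j => (fun t => B t i j) ᵥ*
          Matrix.of fun t => Fin.snoc (α := fun _ => R) (Pi.single t 1) (-x t) := by
  ext i j k
  cases k using Fin.lastCases with
  | last => simp [Matrix.vecMul, dotProduct, Matrix.sum_apply, mul_comm]
  | cast t => simp [Matrix.vecMul, dotProduct, Pi.single_apply]

theorem tensorRank3_le_rank_add_general {F : Type*} [Field F] {n m s : ℕ}
    (A : Matrix (Fin n) (Fin m) F) (B : Fin s → Matrix (Fin n) (Fin m) F) (x : Fin s → F) :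
    tensorRank3 F n m (s + 1) (fun i j k => Fin.lastCases (A i j) (fun t => B t i j) k)
      ≤ (A + ∑ t, x t • B t).rank + tensorRank3 F n m s (fun i j t => B t i j) := by
  rw [lastCases_eq_add_vecMul A B x]
  exact (tensorRank3_add_le _ _).trans
    (add_le_add (tensorRank3_mul_le_rank _ _) (tensorRank3_vecMul_le _ _))

/-- Let `B_k = v_k w_kᵀ` (for `k = 1, …, s`) be rank-one matrices that are
linearly independent in `Mat_{n,m}(F)`, let `A` be an `n × m` matrix, and let
`T = A ⊗ e_{s+1} + ∑_k v_k ⊗ w_k ⊗ e_k`.  Then for every `(x_1, …, x_s) ∈ F^s` the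
tensor rank of `T` is at most `rank (A + x_1 B_1 + ⋯ + x_s B_s) + s`. -/
theorem tensorRank3_le_rank_add
    (F : Type*) [Field F] (n m s : ℕ)
    (A : Matrix (Fin n) (Fin m) F) (v : Fin s → Fin n → F) (w : Fin s → Fin m → F)
    (hli : LinearIndependent F (fun k : Fin s => Matrix.vecMulVec (v k) (w k)))
    (x : Fin s → F) :
    tensorRank3 F n m (s + 1)
        (fun i j k => Fin.lastCases (A i j) (fun t : Fin s => v t i * w t j) k)
      ≤ (A + ∑ k : Fin s, x k • Matrix.vecMulVec (v k) (w k)).rank + s :=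
  (tensorRank3_le_rank_add_general A _ x).trans
    (Nat.add_le_add_left (tensorRank3_vecMulVec_le v w) _)
end

section
/- Let F be a field, let A be an n×m matrix over F, and let B_1,…,B_s ∈ Mat_{n,m}(F) be rank-1 matrices, B_k = v_k w_kᵀ with v_k ∈ F^n, w_k ∈ F^m, which are linearly independent in Mat_{n,m}(F). Let T : Fin n → Fin m → Fin (s+1) → F be the order-3 tensor with slices T(·,·,k) = B_k for k = 1,…,s and T(·,·,s+1) = A, and let l be the tensor rank of T. Then the minimum of rank(A + x_1 B_1 + ⋯ + x_s B_s) over all (x_1,…,x_s) ∈ F^s equals l − s. -/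
/-!
Write a tensor of rank `l` as `∑ u, a u ⊗ b u ⊗ c u`: every slice is the image of a vector of `F^l`
under the linear map `d ↦ ∑ u, d u • a u (b u)ᵀ`, and a vector with `r` nonzero coordinates is sent
to a matrix of rank at most `r`. The slices `B_k` come from vectors spanning an `s`-dimensional
subspace `W` of `F^l`, and every coset of `W` contains a vector with at most `l - s` nonzero
coordinates, because `F^l ⧸ W` is spanned by the images of the standard basis vectors. The coset of
the vector giving `A` thus yields some `A + ∑ x_k B_k` of rank at most `l - s`. Conversely, a
decomposition of `A + ∑ x_k B_k` into `r` rank-one matrices, together with the `B_k` themselves,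
decomposes the tensor into `r + s` pure tensors.
-/

open Module Matrix

section Sparse

variable {F ι : Type*} [DivisionRing F] [DecidableEq F] [Fintype ι]

theorem exists_sum_smul_eq_and_hammingNorm_le {V : Type*} [AddCommGroup V] [Module F V]
    {b : ι → V} {v : V} (hv : v ∈ Submodule.span F (Set.range b)) :
    ∃ c : ι → F, ∑ i, c i • b i = v ∧
      hammingNorm c ≤ finrank F (Submodule.span F (Set.range b)) := by
  classical
  have := FiniteDimensional.span_of_finite F (Set.finite_range b)
  obtain ⟨f, hf, hspan, -⟩ := Submodule.exists_fun_fin_finrank_span_eq F (Set.range b)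
  choose p hp using hf
  rw [← hspan, Submodule.mem_span_range_iff_exists_fun] at hv
  obtain ⟨d, rfl⟩ := hv
  refine ⟨∑ k, Pi.single (p k) (d k), ?_, ?_⟩
  · simp only [Finset.sum_apply, Finset.sum_smul]
    rw [Finset.sum_comm]
    simp [Pi.single_apply, hp]
  · have hsupp : ({i | (∑ k, Pi.single (p k) (d k) : ι → F) i ≠ 0} : Finset ι) ⊆
        Finset.univ.image p := by
      intro i hi
      obtain ⟨k, -, hk⟩ := Finset.exists_ne_zero_of_sum_ne_zero
        (by simpa only [Finset.mem_filter_univ, Finset.sum_apply] using hi)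
      rw [Pi.single_apply, ite_ne_right_iff] at hk
      exact Finset.mem_image.2 ⟨k, Finset.mem_univ k, hk.1.symm⟩
    calc hammingNorm (∑ k, Pi.single (p k) (d k) : ι → F)
        ≤ (Finset.univ.image p).card := Finset.card_le_card hsupp
      _ ≤ Finset.univ.card := Finset.card_image_le
      _ = finrank F (Submodule.span F (Set.range b)) := Finset.card_fin _

theorem exists_mem_hammingNorm_add_le_finrank_quotient (W : Submodule F (ι → F)) (e : ι → F) :
    ∃ y ∈ W, hammingNorm (e + y) ≤ finrank F ((ι → F) ⧸ W) := by
  classical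
  have mkQ_eq_sum (z : ι → F) : W.mkQ z = ∑ i, z i • W.mkQ (Pi.basisFun F ι i) := by
    conv_lhs => rw [← (Pi.basisFun F ι).sum_repr z]
    simp only [map_sum, map_smul, Pi.basisFun_repr]
  have he : W.mkQ e ∈ Submodule.span F (Set.range fun i => W.mkQ (Pi.basisFun F ι i)) :=
    Submodule.mem_span_range_iff_exists_fun F |>.2 ⟨e, (mkQ_eq_sum e).symm⟩
  obtain ⟨c, hc, hcard⟩ := exists_sum_smul_eq_and_hammingNorm_le he
  refine ⟨c - e, ?_, ?_⟩
  · rw [← Submodule.ker_mkQ W, LinearMap.mem_ker, map_sub, mkQ_eq_sum c, hc, sub_self]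
  · rw [add_sub_cancel]
    exact hcard.trans (Submodule.finrank_le _)

end Sparse

section RankOneSums

variable {F m n μ : Type*} [Field F] [Fintype n] [Fintype μ]

theorem rank_sum_smul_vecMulVec_le_hammingNorm [DecidableEq F]
    (a : μ → m → F) (b : μ → n → F) (d : μ → F) :
    (∑ u, d u • vecMulVec (a u) (b u)).rank ≤ hammingNorm d := by
  classical
  have hfactor : ∑ u, d u • vecMulVec (a u) (b u) = (of a)ᵀ * diagonal d * of b := by
    ext i j
    rw [mul_apply]
    simp [Matrix.sum_apply, mul_diagonal, vecMulVec_apply, mul_left_comm, mul_assoc]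
  calc (∑ u, d u • vecMulVec (a u) (b u)).rank
      ≤ ((of a)ᵀ * diagonal d).rank := hfactor ▸ rank_mul_le_left _ _
    _ ≤ (diagonal d).rank := rank_mul_le_right _ _
    _ = hammingNorm d := by rw [rank_diagonal, Fintype.card_subtype, hammingNorm]

theorem exists_eq_sum_vecMulVec_rank (M : Matrix m n F) :
    ∃ (a : Fin M.rank → m → F) (b : Fin M.rank → n → F), M = ∑ u, vecMulVec (a u) (b u) := by
  rw [M.rank_eq_finrank_span_cols]
  have := FiniteDimensional.span_of_finite F (Set.finite_range M.col)
  obtain ⟨a, -, hspan, -⟩ := Submodule.exists_fun_fin_finrank_span_eq F (Set.range M.col)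
  have hcol (j : n) : ∃ β : Fin _ → F, ∑ u, β u • a u = M.col j := by
    rw [← Submodule.mem_span_range_iff_exists_fun, hspan]
    exact Submodule.subset_span ⟨j, rfl⟩
  choose β hβ using hcol
  refine ⟨a, fun u j => β j u, ?_⟩
  ext i j
  simpa [Matrix.sum_apply, vecMulVec_apply, mul_comm] using (congrFun (hβ j) i).symm

theorem exists_rank_add_sum_smul_add_card_le {τ : Type*} [Fintype τ]
    (a : μ → m → F) (b : μ → n → F) (e : μ → F) (C : τ → μ → F)
    (hli : LinearIndependent F fun t => ∑ u, C t u • vecMulVec (a u) (b u)) :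
    ∃ x : τ → F,
      (∑ u, e u • vecMulVec (a u) (b u) +
        ∑ t, x t • ∑ u, C t u • vecMulVec (a u) (b u)).rank + Fintype.card τ ≤
      Fintype.card μ := by
  classical
  let Φ := Fintype.linearCombination F fun u => vecMulVec (a u) (b u)
  have hC : LinearIndependent F C := .of_comp Φ hli
  obtain ⟨y, hy, hnorm⟩ :=
    exists_mem_hammingNorm_add_le_finrank_quotient (Submodule.span F (Set.range C)) e
  obtain ⟨x, rfl⟩ := (Submodule.mem_span_range_iff_exists_fun F).1 hy
  refine ⟨x, ?_⟩
  change (Φ e + ∑ t, x t • Φ (C t)).rank + _ ≤ _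
  calc (Φ e + ∑ t, x t • Φ (C t)).rank + Fintype.card τ
      = (Φ (e + ∑ t, x t • C t)).rank + Fintype.card τ := by
        simp only [map_add, map_sum, map_smul]
    _ ≤ finrank F ((μ → F) ⧸ Submodule.span F (Set.range C)) +
          finrank F (Submodule.span F (Set.range C)) := by
        rw [finrank_span_eq_card hC]
        gcongr
        exact (rank_sum_smul_vecMulVec_le_hammingNorm a b _).trans hnorm
    _ = Fintype.card μ := by
        rw [Submodule.finrank_quotient_add_finrank, finrank_fintype_fun_eq_card]

end RankOneSums

/-- The frontal slice `T(·, ·, k)` of an order-3 tensor. A decomposition of `T` into pure tensors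
`a u ⊗ b u ⊗ c u` is a simultaneous expansion of all frontal slices in the rank-one matrices
`a u (b u)ᵀ`, with coefficients `c u k`. -/
def frontalSlice {m n p F : Type*} (T : m → n → p → F) (k : p) : Matrix m n F :=
  of fun i j => T i j k

section TensorRank

variable {F : Type*} [Field F] {n m p s : ℕ}

theorem tensorRank3_le_card {μ : Type*} [Fintype μ] {T : Fin n → Fin m → Fin p → F}
    (a : μ → Fin n → F) (b : μ → Fin m → F) (c : Fin p → μ → F)
    (h : ∀ k, frontalSlice T k = ∑ u, c k u • vecMulVec (a u) (b u)) :
    tensorRank3 F n m p T ≤ Fintype.card μ := by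
  let e := (Fintype.equivFin μ).symm
  refine Nat.sInf_le ⟨a ∘ e, b ∘ e, fun u k => c k (e u), fun i j k => ?_⟩
  calc T i j k = ∑ u, a u i * b u j * c k u := by
        simpa [frontalSlice, Matrix.sum_apply, vecMulVec_apply, mul_comm, mul_assoc] using
          congrFun₂ (h k) i j
    _ = ∑ u, a (e u) i * b (e u) j * c k (e u) :=
        (e.sum_comp fun u => a u i * b u j * c k u).symm

theorem exists_frontalSlice_eq_sum_tensorRank3 (T : Fin n → Fin m → Fin p → F) :
    ∃ (a : Fin (tensorRank3 F n m p T) → Fin n → F) (b : Fin (tensorRank3 F n m p T) → Fin m → F)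
      (c : Fin p → Fin (tensorRank3 F n m p T) → F),
      ∀ k, frontalSlice T k = ∑ u, c k u • vecMulVec (a u) (b u) := by
  let lengths : Set ℕ :=
    {l | ∃ (a : Fin l → Fin n → F) (b : Fin l → Fin m → F) (c : Fin l → Fin p → F),
      ∀ i j k, T i j k = ∑ u, a u i * b u j * c u k}
  have hne : lengths.Nonempty := by
    let e : Fin (n * m) ≃ Fin n × Fin m := finProdFinEquiv.symm
    refine ⟨n * m, fun u => Pi.single (e u).1 1, fun u => Pi.single (e u).2 1,
      fun u => T (e u).1 (e u).2, fun i j k => ?_⟩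
    rw [e.sum_comp fun q : Fin n × Fin m =>
      (Pi.single q.1 1 : Fin n → F) i * (Pi.single q.2 1 : Fin m → F) j * T q.1 q.2 k]
    simp [Fintype.sum_prod_type, Pi.single_apply]
  obtain ⟨a, b, c, h⟩ : tensorRank3 F n m p T ∈ lengths := Nat.sInf_mem hne
  refine ⟨a, b, fun k u => c u k, fun k => ?_⟩
  ext i j
  simpa [frontalSlice, Matrix.sum_apply, vecMulVec_apply, mul_comm, mul_assoc] using h i j k

theorem tensorRank3_le_card_add {μ : Type*} [Fintype μ] {T : Fin n → Fin m → Fin (s + 1) → F}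
    {v : Fin s → Fin n → F} {w : Fin s → Fin m → F}
    (h : ∀ t, frontalSlice T (Fin.castSucc t) = vecMulVec (v t) (w t)) (x : Fin s → F)
    (a : μ → Fin n → F) (b : μ → Fin m → F)
    (hab : frontalSlice T (Fin.last s) + ∑ t, x t • vecMulVec (v t) (w t) =
      ∑ u, vecMulVec (a u) (b u)) :
    tensorRank3 F n m (s + 1) T ≤ Fintype.card μ + s := by
  let c : Fin (s + 1) → μ ⊕ Fin s → F :=
    Fin.snoc (α := fun _ => μ ⊕ Fin s → F)
      (fun t => Sum.elim 0 (Pi.single t 1)) (Sum.elim 1 (-x))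
  refine (tensorRank3_le_card (Sum.elim a v) (Sum.elim b w) c fun k => ?_).trans_eq (by simp)
  induction k using Fin.lastCases with
  | last => simp [c, ← hab]
  | cast t => simp [c, h, Pi.single_apply, ite_smul]

theorem tensorRank3_le_rank_add_s7 {T : Fin n → Fin m → Fin (s + 1) → F}
    {v : Fin s → Fin n → F} {w : Fin s → Fin m → F}
    (h : ∀ t, frontalSlice T (Fin.castSucc t) = vecMulVec (v t) (w t)) (x : Fin s → F) :
    tensorRank3 F n m (s + 1) T ≤
      (frontalSlice T (Fin.last s) + ∑ t, x t • vecMulVec (v t) (w t)).rank + s := by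
  obtain ⟨a, b, hab⟩ := exists_eq_sum_vecMulVec_rank
    (frontalSlice T (Fin.last s) + ∑ t, x t • vecMulVec (v t) (w t))
  simpa only [Fintype.card_fin] using tensorRank3_le_card_add h x a b hab

theorem exists_rank_add_le_tensorRank3 (T : Fin n → Fin m → Fin (s + 1) → F)
    (hli : LinearIndependent F fun t : Fin s => frontalSlice T (Fin.castSucc t)) :
    ∃ x : Fin s → F,
      (frontalSlice T (Fin.last s) + ∑ t, x t • frontalSlice T (Fin.castSucc t)).rank + s ≤
        tensorRank3 F n m (s + 1) T := by
  obtain ⟨a, b, c, h⟩ := exists_frontalSlice_eq_sum_tensorRank3 T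
  simp only [h] at hli ⊢
  simpa only [Fintype.card_fin] using
    exists_rank_add_sum_smul_add_card_le a b (c (Fin.last s)) (fun t => c (Fin.castSucc t)) hli

end TensorRank

/-- Let `B_k = v_k w_kᵀ` (for `k = 1, …, s`) be rank-one matrices that are
linearly independent in `Mat_{n,m}(F)`, let `A` be an `n × m` matrix, let
`T = A ⊗ e_{s+1} + ∑_k v_k ⊗ w_k ⊗ e_k`, and let `l` be the tensor rank of `T`.  Then the
minimum of `rank (A + x_1 B_1 + ⋯ + x_s B_s)` over all `(x_1, …, x_s) ∈ F^s` is `l - s`. -/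
theorem sInf_rank_eq_tensorRank3_sub
    (F : Type*) [Field F] (n m s : ℕ)
    (A : Matrix (Fin n) (Fin m) F) (v : Fin s → Fin n → F) (w : Fin s → Fin m → F)
    (hli : LinearIndependent F (fun k : Fin s => Matrix.vecMulVec (v k) (w k)))
    (l : ℕ)
    (hl : tensorRank3 F n m (s + 1)
        (fun i j k => Fin.lastCases (A i j) (fun t : Fin s => v t i * w t j) k) = l) :
    sInf {d : ℕ | ∃ x : Fin s → F,
        (A + ∑ k : Fin s, x k • Matrix.vecMulVec (v k) (w k)).rank = d} = l - s := by
  let T : Fin n → Fin m → Fin (s + 1) → F :=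
    fun i j k => Fin.lastCases (A i j) (fun t : Fin s => v t i * w t j) k
  change tensorRank3 F n m (s + 1) T = l at hl
  have hA : frontalSlice T (Fin.last s) = A := by
    ext i j
    simp [frontalSlice, T]
  have hB (t : Fin s) : frontalSlice T (Fin.castSucc t) = vecMulVec (v t) (w t) := by
    ext i j
    simp [frontalSlice, T, vecMulVec_apply]
  have hupper (x : Fin s → F) : l ≤ (A + ∑ k, x k • vecMulVec (v k) (w k)).rank + s := by
    simpa only [hA, hl] using tensorRank3_le_rank_add_s7 hB x
  obtain ⟨x, hx⟩ : ∃ x : Fin s → F, (A + ∑ k, x k • vecMulVec (v k) (w k)).rank + s ≤ l := by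
    simpa only [hA, hB, hl] using exists_rank_add_le_tensorRank3 T (by simpa only [hB] using hli)
  refine IsLeast.csInf_eq ⟨⟨x, ?_⟩, ?_⟩
  · exact Nat.eq_sub_of_add_eq (hx.antisymm (hupper x))
  · rintro _ ⟨y, rfl⟩
    exact Nat.sub_le_of_le_add (hupper y)
end
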